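/- Let t ∈ ℤ_+ and let S be a finite-dimensional simple module over the Lie superalgebra p^(t). Then [p^(t)_1̄, p^(t)_1̄] S = 0, where p^(t)_1̄ = ⊕_{m>t} ℂG_{m+1/2} is the odd part of p^(t). -/

import Mathlib

/-- A module over the Lie superalgebra `p^{(t)} = ⊕_{m>t} ℂ L_m ⊕ ⊕_{m>t} ℂ G_{m+1/2}`
(a subalgebra of the Neveu–Schwarz algebra).  `L m` is the action of `L_m` and `G j` is
the action of `G_{j+1/2}`; only the operators with index `> t` are part of the structure
(the relations are imposed only for indices `> t`). -/
structure PRep (t : ℕ) : Type 1 where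
  carrier : Type
  [isAddCommGroup : AddCommGroup carrier]
  [isModule : Module ℂ carrier]
  L : ℤ → carrier →ₗ[ℂ] carrier
  G : ℤ → carrier →ₗ[ℂ] carrier
  rel_LL : ∀ m n : ℤ, (t : ℤ) < m → (t : ℤ) < n → ∀ v : carrier,
    L m (L n v) - L n (L m v) = ((m : ℂ) - n) • L (m + n) v
  rel_LG : ∀ m j : ℤ, (t : ℤ) < m → (t : ℤ) < j → ∀ v : carrier,
    L m (G j v) - G j (L m v) = (((m : ℂ) - 2 * j - 1) / 2) • G (m + j) v
  rel_GG : ∀ j k : ℤ, (t : ℤ) < j → (t : ℤ) < k → ∀ v : carrier,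
    G j (G k v) + G k (G j v) = (2 : ℂ) • L (j + k + 1) v

attribute [instance] PRep.isAddCommGroup PRep.isModule

def PRep.Invariant {t : ℕ} (V : PRep t) (p : Submodule ℂ V.carrier) : Prop :=
  (∀ m : ℤ, (t : ℤ) < m → ∀ v ∈ p, V.L m v ∈ p) ∧
    (∀ j : ℤ, (t : ℤ) < j → ∀ v ∈ p, V.G j v ∈ p)

def PRep.IsSimple {t : ℕ} (V : PRep t) : Prop :=
  (∃ v : V.carrier, v ≠ 0) ∧
    ∀ p : Submodule ℂ V.carrier, V.Invariant p → p = ⊥ ∨ p = ⊤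

/-!
Let `θ = X · d/dX`. Encode `∑ aᵢ L (i + s)` by the polynomial `f = ∑ aᵢ X ^ i` and the shift `s`;
then bracketing with `L k` replaces `f` by `(θ + s - k) f` and `s` by `s + k`. In a
finite-dimensional Lie algebra the family `L` satisfies some linear relation `f`. Bracketing
twice shows that all large shifts of `f` are relations, and the space of polynomials with this
property is stable under `θ`. Since the eigenvectors of `θ` are the monomials, it contains a
monomial, which says that `L m = 0` for all large `m`; hence also `G m = 0` for all large `m`.

On a simple module the vanishing descends. If every generator of index above `n` acts as zero, then
`G n` anticommutes with each `G j` and commutes with each `L m`, so its kernel is a submodule; as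
`G n` squares to zero, `G n = 0`. Likewise `L n` commutes with every generator, hence is a scalar
by Schur's lemma, and for `n ≥ 2t + 3` it is a nonzero multiple of `[L (t + 1), L (n - t - 1)]`,
so it has trace zero and vanishes. The odd brackets are multiples of `L n` with `n ≥ 2t + 3`.
-/

open Polynomial Filter

section EulerOperator

/-- The Euler operator `X · d/dX` on polynomials, with eigenvectors `X ^ n` of eigenvalue `n`. -/
noncomputable def eulerOperator (R : Type*) [CommSemiring R] : Module.End R R[X] :=
  LinearMap.mulLeft R X ∘ₗ derivative

theorem coeff_eulerOperator {R : Type*} [CommSemiring R] (f : R[X]) (i : ℕ) :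
    (eulerOperator R f).coeff i = i * f.coeff i := by
  cases i with
  | zero => simp [eulerOperator]
  | succ i => simp [eulerOperator, coeff_derivative, mul_comm]

theorem eulerOperator_monomial {R : Type*} [CommSemiring R] (i : ℕ) (a : R) :
    eulerOperator R (monomial i a) = (i : R) • monomial i a := by
  ext j
  simp only [coeff_eulerOperator, coeff_smul, coeff_monomial, smul_eq_mul]
  split_ifs with h <;> simp [h]

variable {R : Type*} [CommRing R]

theorem natDegree_eulerOperator_sub_lt {f : R[X]}
    (hf : eulerOperator R f - (f.natDegree : R) • f ≠ 0) :
    (eulerOperator R f - (f.natDegree : R) • f).natDegree < f.natDegree := by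
  rw [natDegree_lt_iff_degree_lt hf, degree_lt_iff_coeff_zero]
  intro i hi
  obtain rfl | hi := hi.eq_or_lt
  · simp [coeff_eulerOperator]
  · simp [coeff_eulerOperator, coeff_eq_zero_of_natDegree_lt hi]

variable [IsDomain R] [CharZero R]

theorem eq_monomial_of_eulerOperator_eq_smul {f : R[X]} {n : ℕ}
    (hf : eulerOperator R f = (n : R) • f) : f = monomial n (f.coeff n) := by
  ext i
  rw [coeff_monomial]
  split_ifs with hi
  · rw [hi]
  · have hcoeff : (i : R) * f.coeff i = n * f.coeff i := by
      simpa [coeff_eulerOperator] using congrArg (coeff · i) hf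
    by_contra hne
    exact hi (Nat.cast_injective (mul_right_cancel₀ hne hcoeff)).symm

theorem exists_monomial_mem_of_eulerOperator_mem {p : Submodule R R[X]} (hp : p ≠ ⊥)
    (hinv : ∀ f ∈ p, eulerOperator R f ∈ p) : ∃ n : ℕ, ∃ a : R, a ≠ 0 ∧ monomial n a ∈ p := by
  obtain ⟨f, hf, hf0⟩ := p.exists_mem_ne_zero_of_ne_bot hp
  induction hn : f.natDegree using Nat.strong_induction_on generalizing f with
  | _ n ih =>
    subst hn
    by_cases hg : eulerOperator R f - (f.natDegree : R) • f = 0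
    · have hmon := eq_monomial_of_eulerOperator_eq_smul (sub_eq_zero.1 hg)
      exact ⟨f.natDegree, f.leadingCoeff, leadingCoeff_ne_zero.2 hf0, hmon ▸ hf⟩
    · exact ih _ (natDegree_eulerOperator_sub_lt hg) _
        (p.sub_mem (hinv f hf) (p.smul_mem _ hf)) hg rfl

end EulerOperator

section EventualRelations

variable {R M : Type*} [CommSemiring R] [AddCommMonoid M] [Module R M]

/-- The linear map `X ^ i ↦ L (i + s)`, by which polynomials encode the linear combinations
of the `L m` with `m ≥ s`. -/
noncomputable def shiftedSum (R : Type*) {M : Type*} [CommSemiring R] [AddCommMonoid M]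
    [Module R M] (L : ℤ → M) (s : ℤ) : R[X] →ₗ[R] M :=
  (basisMonomials R).constr R fun i ↦ L (i + s)

theorem shiftedSum_monomial (L : ℤ → M) (s : ℤ) (i : ℕ) (a : R) :
    shiftedSum R L s (monomial i a) = a • L (i + s) := by
  have hone : shiftedSum R L s (monomial i 1) = L (i + s) := by
    simpa only [shiftedSum, coe_basisMonomials] using
      (basisMonomials R).constr_basis R (fun i : ℕ ↦ L (i + s)) i
  rw [← hone, ← map_smul, smul_monomial, smul_eq_mul, mul_one]

/-- The polynomials `∑ aᵢ X ^ i` for which the relation `∑ aᵢ L (i + s) = 0` holds for all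
large `s`. -/
def eventualRelations (R : Type*) {M : Type*} [CommSemiring R] [AddCommMonoid M] [Module R M]
    (L : ℤ → M) : Submodule R R[X] where
  carrier := {f | ∀ᶠ s in atTop, shiftedSum R L s f = 0}
  zero_mem' := by simp
  add_mem' hf hg := by
    filter_upwards [hf, hg] with s hfs hgs
    rw [map_add, hfs, hgs, add_zero]
  smul_mem' a f hf := by
    filter_upwards [hf] with s hfs
    rw [map_smul, hfs, smul_zero]

theorem mem_eventualRelations {L : ℤ → M} {f : R[X]} :
    f ∈ eventualRelations R L ↔ ∀ᶠ s in atTop, shiftedSum R L s f = 0 :=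
  Iff.rfl

theorem exists_ne_zero_shiftedSum_eq_zero {K V : Type*} [Field K] [AddCommGroup V] [Module K V]
    [FiniteDimensional K V] (L : ℤ → V) (s : ℤ) :
    ∃ f : K[X], f ≠ 0 ∧ shiftedSum K L s f = 0 := by
  by_contra! hker
  have hinj : Function.Injective (shiftedSum K L s) :=
    (injective_iff_map_eq_zero _).2 fun f ↦ not_imp_not.1 (hker f)
  exact Polynomial.not_finite (Module.Finite.of_injective _ hinj)

end EventualRelations

/-- The elements `L m`, `m > t`, of a Lie algebra over `R` satisfy the relations of the Witt
algebra; nothing is required of `L m` for `m ≤ t`. -/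
def WittRelationsAbove (R : Type*) {A : Type*} [CommRing R] [LieRing A] [LieAlgebra R A]
    (t : ℕ) (L : ℤ → A) : Prop :=
  ∀ m n : ℤ, (t : ℤ) < m → (t : ℤ) < n → ⁅L m, L n⁆ = ((m : R) - n) • L (m + n)

namespace WittRelationsAbove

section CommRing

variable {R A : Type*} [CommRing R] [LieRing A] [LieAlgebra R A] {t : ℕ} {L : ℤ → A}

theorem lie_shiftedSum (hL : WittRelationsAbove R t L) {s k : ℤ} (hs : t < s) (hk : t < k)
    (f : R[X]) :
    ⁅shiftedSum R L s f, L k⁆ =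
      shiftedSum R L (s + k) (eulerOperator R f + ((s : R) - k) • f) := by
  induction f using Polynomial.induction_on' with
  | add f g hf hg =>
    simp only [map_add, add_lie, hf, hg, smul_add]
    abel
  | monomial i a =>
    rw [eulerOperator_monomial, ← add_smul, map_smul, shiftedSum_monomial, shiftedSum_monomial,
      smul_lie, hL _ _ (by omega) hk, smul_comm, add_assoc]
    push_cast
    rw [add_sub_assoc]

theorem lie_lie_shiftedSum (hL : WittRelationsAbove R t L) {s k l : ℤ} (hs : t < s)
    (hk : t < k) (hl : t < l) (f : R[X]) :
    ⁅⁅shiftedSum R L s f, L k⁆, L l⁆ =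
      shiftedSum R L (s + k + l) (eulerOperator R (eulerOperator R f) +
        (2 * s - l : R) • eulerOperator R f + (((s : R) + k - l) * (s - k)) • f) := by
  rw [hL.lie_shiftedSum hs hk, hL.lie_shiftedSum (by omega) hl]
  congr 1
  simp only [map_add, map_smul]
  push_cast
  module

theorem eulerOperator_mem_eventualRelations (hL : WittRelationsAbove R t L) {f : R[X]}
    (hf : f ∈ eventualRelations R L) : eulerOperator R f ∈ eventualRelations R L := by
  obtain ⟨N, hN⟩ := eventually_atTop.1 (mem_eventualRelations.1 hf)
  refine mem_eventualRelations.2 ?_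
  filter_upwards [eventually_ge_atTop (max N (t + 1) + (t + 1))] with r hr
  have hbracket := hL.lie_shiftedSum (s := r - (t + 1)) (k := t + 1) (by omega) (by omega) f
  rw [hN _ (by omega), zero_lie, sub_add_cancel, map_add, map_smul, hN r (by omega), smul_zero,
    add_zero] at hbracket
  exact hbracket.symm

end CommRing

variable {K A : Type*} [Field K] [CharZero K] [LieRing A] [LieAlgebra K A] {t : ℕ} {L : ℤ → A}

theorem mem_eventualRelations_of_shiftedSum_eq_zero (hL : WittRelationsAbove K t L) {s : ℤ}
    (hs : t < s) {f : K[X]} (hf : shiftedSum K L s f = 0) : f ∈ eventualRelations K L := by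
  refine mem_eventualRelations.2 ?_
  filter_upwards [eventually_ge_atTop (s + 2 * t + 4)] with r hr
  -- Bracketing with `L k` and then with `L (r - s - k)` lands in the shift `r` for every `k`;
  -- the resulting polynomial is quadratic in `k` with second difference `-4 • f`.
  let q (k : ℤ) : K[X] := eulerOperator K (eulerOperator K f) +
    (2 * s - (r - s - k : ℤ) : K) • eulerOperator K f +
      (((s : K) + k - (r - s - k : ℤ)) * (s - k)) • f
  have hq (k : ℤ) (hk : t < k) (hkr : t < r - s - k) : shiftedSum K L r (q k) = 0 := by
    have hbracket := hL.lie_lie_shiftedSum hs hk hkr f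
    rw [hf, zero_lie, zero_lie, show s + k + (r - s - k) = r by ring] at hbracket
    exact hbracket.symm
  have hdiff : q (t + 1) - (2 : K) • q (t + 2) + q (t + 3) = (-4 : K) • f := by
    simp only [q]
    push_cast
    module
  have hfour : (-4 : K) • shiftedSum K L r f = 0 := by
    rw [← map_smul, ← hdiff, map_add, map_sub, map_smul, hq _ (by omega) (by omega),
      hq _ (by omega) (by omega), hq _ (by omega) (by omega)]
    simp
  exact (smul_eq_zero.1 hfour).resolve_left (by norm_num)

theorem eventually_eq_zero [FiniteDimensional K A] (hL : WittRelationsAbove K t L) :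
    ∀ᶠ m in atTop, L m = 0 := by
  obtain ⟨f, hf0, hf⟩ := exists_ne_zero_shiftedSum_eq_zero (K := K) L (t + 1)
  have hfmem := hL.mem_eventualRelations_of_shiftedSum_eq_zero (by omega) hf
  obtain ⟨n, a, ha, hmem⟩ := exists_monomial_mem_of_eulerOperator_mem
    ((Submodule.ne_bot_iff _).2 ⟨f, hfmem, hf0⟩)
    fun _ ↦ hL.eulerOperator_mem_eventualRelations
  have hshift : Tendsto (fun m : ℤ ↦ m - n) atTop atTop :=
    tendsto_atTop_add_const_right _ _ tendsto_id
  filter_upwards [hshift.eventually (mem_eventualRelations.1 hmem)] with m hm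
  rw [shiftedSum_monomial, add_sub_cancel] at hm
  exact (smul_eq_zero.1 hm).resolve_left ha

end WittRelationsAbove

theorem eq_zero_of_lie_eq_algebraMap {K V : Type*} [Field K] [CharZero K] [AddCommGroup V]
    [Module K V] [FiniteDimensional K V] [Nontrivial V] {f g : Module.End K V} {c : K}
    (h : ⁅f, g⁆ = algebraMap K (Module.End K V) c) : c = 0 := by
  have htrace : c * Module.finrank K V = 0 := by
    rw [← smul_eq_mul, ← LinearMap.trace_one, ← map_smul, ← Algebra.algebraMap_eq_smul_one, ← h,
      LinearMap.trace_lie]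
  exact (mul_eq_zero.1 htrace).resolve_right (Nat.cast_ne_zero.2 Module.finrank_pos.ne')

namespace PRep

attribute [local instance] LieRing.ofAssociativeRing

variable {t : ℕ} {S : PRep t}

theorem wittRelationsAbove_L (S : PRep t) :
    WittRelationsAbove ℂ (A := Module.End ℂ S.carrier) t S.L :=
  fun m n hm hn ↦ LinearMap.ext (S.rel_LL m n hm hn)

theorem G_add_eq_zero_of_L_eq_zero {m j : ℤ} (hm : t < m) (hj : t < j) (hmj : m ≠ 2 * j + 1)
    (hL : S.L m = 0) : S.G (m + j) = 0 := by
  have hcoeff : ((m : ℂ) - 2 * j - 1) / 2 ≠ 0 :=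
    div_ne_zero (by exact_mod_cast (show m - 2 * j - 1 ≠ 0 by omega)) two_ne_zero
  ext v
  have hrel := S.rel_LG m j hm hj v
  simp only [hL, LinearMap.zero_apply, map_zero, sub_zero] at hrel
  exact (smul_eq_zero.1 hrel.symm).resolve_left hcoeff

/-- All generators of index larger than `n` act as zero. -/
def VanishesAbove (S : PRep t) (n : ℤ) : Prop :=
  ∀ m, n < m → S.L m = 0 ∧ S.G m = 0

theorem VanishesAbove.mono {n n' : ℤ} (h : S.VanishesAbove n) (hn : n ≤ n') :
    S.VanishesAbove n' :=
  fun m hm ↦ h m (hn.trans_lt hm)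

theorem exists_vanishesAbove (S : PRep t) [FiniteDimensional ℂ S.carrier] :
    ∃ n, S.VanishesAbove n := by
  obtain ⟨N, hN⟩ := eventually_atTop.1 S.wittRelationsAbove_L.eventually_eq_zero
  refine ⟨max N (2 * t + 3) + (t + 1), fun m hm ↦ ⟨hN m (by omega), ?_⟩⟩
  have hG := G_add_eq_zero_of_L_eq_zero (m := m - (t + 1)) (j := t + 1)
    (by omega) (by omega) (by omega) (hN _ (by omega))
  rwa [sub_add_cancel] at hG

namespace IsSimple

theorem nontrivial (hS : S.IsSimple) : Nontrivial S.carrier :=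
  let ⟨v, hv⟩ := hS.1
  ⟨v, 0, hv⟩

theorem exists_eq_algebraMap_of_commute [FiniteDimensional ℂ S.carrier] (hS : S.IsSimple)
    {T : Module.End ℂ S.carrier} (hL : ∀ m : ℤ, t < m → Commute T (S.L m))
    (hG : ∀ j : ℤ, t < j → Commute T (S.G j)) :
    ∃ c : ℂ, T = algebraMap ℂ (Module.End ℂ S.carrier) c := by
  have := hS.nontrivial
  obtain ⟨c, hc⟩ := Module.End.exists_eigenvalue T
  have hinv : S.Invariant (T.eigenspace c) :=
    ⟨fun m hm ↦ Module.End.mapsTo_genEigenspace_of_comm (hL m hm) c 1,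
      fun j hj ↦ Module.End.mapsTo_genEigenspace_of_comm (hG j hj) c 1⟩
  have htop : T.eigenspace c = ⊤ := (hS.2 _ hinv).resolve_left hc
  refine ⟨c, LinearMap.ext fun v ↦ ?_⟩
  exact Module.End.mem_eigenspace_iff.1 (htop ▸ Submodule.mem_top)

theorem eq_zero_of_invariant_ker (hS : S.IsSimple) {T : Module.End ℂ S.carrier}
    (hinv : S.Invariant (LinearMap.ker T)) (hsq : ∀ v, T (T v) = 0) : T = 0 := by
  obtain hbot | htop := hS.2 _ hinv
  · ext v
    exact LinearMap.ker_eq_bot'.1 hbot _ (hsq v)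
  · exact LinearMap.ker_eq_top.1 htop

theorem L_eq_zero_of_vanishesAbove [FiniteDimensional ℂ S.carrier] (hS : S.IsSimple) {n : ℤ}
    (hn : 2 * (t : ℤ) + 3 ≤ n) (hvan : S.VanishesAbove n) : S.L n = 0 := by
  have := hS.nontrivial
  have hLcomm (m : ℤ) (hm : t < m) : Commute (S.L n) (S.L m) := by
    refine commute_iff_lie_eq.2 ?_
    rw [S.wittRelationsAbove_L n m (by omega) hm, (hvan (n + m) (by omega)).1, smul_zero]
  have hGcomm (j : ℤ) (hj : t < j) : Commute (S.L n) (S.G j) := by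
    refine LinearMap.ext fun v ↦ sub_eq_zero.1 ((S.rel_LG n j (by omega) hj v).trans ?_)
    rw [(hvan (n + j) (by omega)).2, LinearMap.zero_apply, smul_zero]
  obtain ⟨c, hc⟩ := hS.exists_eq_algebraMap_of_commute hLcomm hGcomm
  have hlie := S.wittRelationsAbove_L (t + 1) (n - (t + 1)) (by omega) (by omega)
  rw [add_sub_cancel, hc, Algebra.smul_def, ← map_mul] at hlie
  have hcoeff : ((t + 1 : ℤ) : ℂ) - (n - (t + 1) : ℤ) ≠ 0 := by
    exact_mod_cast (show (t + 1 : ℤ) - (n - (t + 1)) ≠ 0 by omega)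
  rw [hc, (mul_eq_zero.1 (eq_zero_of_lie_eq_algebraMap hlie)).resolve_left hcoeff, map_zero]

theorem G_eq_zero_of_vanishesAbove (hS : S.IsSimple) {n : ℤ} (hn : t < n)
    (hvan : S.VanishesAbove n) : S.G n = 0 := by
  have hanti (j : ℤ) (hj : t < j) (v : S.carrier) : S.G n (S.G j v) + S.G j (S.G n v) = 0 := by
    rw [S.rel_GG n j hn hj v, (hvan (n + j + 1) (by omega)).1, LinearMap.zero_apply, smul_zero]
  have hinv : S.Invariant (LinearMap.ker (S.G n)) := by
    refine ⟨fun m hm v hv ↦ ?_, fun j hj v hv ↦ ?_⟩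
    · rw [LinearMap.mem_ker] at hv ⊢
      simpa [hv, (hvan (m + n) (by omega)).2] using S.rel_LG m n hm hn v
    · rw [LinearMap.mem_ker] at hv ⊢
      simpa [hv] using hanti j hj v
  exact hS.eq_zero_of_invariant_ker hinv fun v ↦ by simpa [← two_smul ℂ] using hanti n hn v

theorem vanishesAbove_of_succ [FiniteDimensional ℂ S.carrier] (hS : S.IsSimple) {n : ℤ}
    (hn : 2 * (t : ℤ) + 2 ≤ n) (hvan : S.VanishesAbove (n + 1)) : S.VanishesAbove n := by
  intro m hm
  obtain rfl | hlt := (Int.add_one_le_of_lt hm).eq_or_lt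
  · exact ⟨hS.L_eq_zero_of_vanishesAbove (by omega) hvan,
      hS.G_eq_zero_of_vanishesAbove (by omega) hvan⟩
  · exact hvan m hlt

theorem vanishesAbove_two_mul_add_two [FiniteDimensional ℂ S.carrier] (hS : S.IsSimple) :
    S.VanishesAbove (2 * t + 2) := by
  obtain ⟨N, hN⟩ := S.exists_vanishesAbove
  obtain hle | hge := le_total N (2 * t + 2)
  · exact hN.mono hle
  · induction N, hge using Int.leInduction with
    | base => exact hN
    | succ n hn ih => exact ih (hS.vanishesAbove_of_succ (by omega) hN)

end IsSimple

end PRep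

/-- Let `t ∈ ℤ_+` and let `S` be a finite dimensional simple module over
the Lie superalgebra `p^{(t)}`.  Then `[p^{(t)}_1̄, p^{(t)}_1̄] S = 0`, where the odd part
`p^{(t)}_1̄` is spanned by the `G_{j+1/2}`, `j > t`: every bracket
`[G_{j+1/2}, G_{k+1/2}]` (`j, k > t`) acts as zero on `S`. -/
theorem pRep_finite_dimensional_simple_odd_bracket_trivial
    (t : ℕ) (ht : 0 < t) (S : PRep t)
    (hfd : FiniteDimensional ℂ S.carrier) (hsimple : S.IsSimple) :
    ∀ j k : ℤ, (t : ℤ) < j → (t : ℤ) < k → ∀ v : S.carrier,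
      S.G j (S.G k v) + S.G k (S.G j v) = 0 := by
  intro j k hj hk v
  have hL : S.L (j + k + 1) = 0 := (hsimple.vanishesAbove_two_mul_add_two (j + k + 1) (by omega)).1
  rw [S.rel_GG j k hj hk v, hL, LinearMap.zero_apply, smul_zero]
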